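/- If a mechanism φ is locally SD-strategyproof, i.e., for all agents i, all preference profiles (P_i,P_{−i}), and all misreports P_i' in the neighborhood N_{P_i}, the assignment vector φ_i(P_i,P_{−i}) stochastically dominates φ_i(P_i',P_{−i}) at P_i, then φ is SD-strategyproof, i.e., the same stochastic dominance holds for all misreports P_i' ∈ 𝒫. -/

import Mathlib

open Finset

/-- A preference order on `M` is a strict total order, represented as a ranking
bijection to `Fin m` (rank `0` is the most preferred object).
`P a < P b` means that `P` ranks `a` above `b`. -/
def Consistent {M : Type*} {m : ℕ} (u : M → ℝ) (P : M ≃ Fin m) : Prop :=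
  ∀ a b : M, P a < P b → u b < u a

/-- The minimal utility value `min_{j ∈ M} u(j)`. -/
noncomputable def minU {M : Type*} [Fintype M] [Nonempty M] (u : M → ℝ) : ℝ :=
  Finset.univ.inf' Finset.univ_nonempty u

/-- `u` satisfies uniformly relatively bounded indifference with respect to `r`. -/
def URBI {M : Type*} [Fintype M] [Nonempty M] (u : M → ℝ) (r : ℝ) : Prop :=
  ∀ a b : M, u b < u a → u b - minU u ≤ r * (u a - minU u)

/-- `P'` is in the neighborhood of `P`: it is obtained from `P` by swapping two
consecutively ranked objects. -/
def Nbhd {M : Type*} {m : ℕ} (P P' : M ≃ Fin m) : Prop :=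
  ∃ (k : ℕ) (h : k + 1 < m),
    P' = P.trans (Equiv.swap ⟨k, Nat.lt_of_succ_lt h⟩ ⟨k + 1, h⟩)

/-- A feasible random assignment mechanism for the setting `(N, M, q)`. -/
def Feasible {N M : Type*} [Fintype N] [Fintype M] {m : ℕ} (q : M → ℕ)
    (φ : (N → M ≃ Fin m) → N → M → ℝ) : Prop :=
  ∀ P : N → M ≃ Fin m,
    (∀ i j, 0 ≤ φ P i j) ∧ (∀ i, ∑ j, φ P i j = 1) ∧ (∀ j, ∑ i, φ P i j ≤ (q j : ℝ))

/-- `x` stochastically dominates `y` at the preference order `P`. -/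
def SDom {M : Type*} [Fintype M] {m : ℕ} (P : M ≃ Fin m) (x y : M → ℝ) : Prop :=
  ∀ j : M, ∑ j' ∈ Finset.univ.filter (fun j' => P j' ≤ P j), y j'
    ≤ ∑ j' ∈ Finset.univ.filter (fun j' => P j' ≤ P j), x j'

/-!
Swapping two consecutively ranked objects leaves every upper contour set but one unchanged.
Applying local SD-strategyproofness in both directions across such a swap therefore shows that the
swap only moves probability from the demoted object to the promoted one. Bubble sort leads from any
misreport to the truth `P` by swaps that each promote the `P`-better of two objects, and no such
transfer decreases the probability of an upper contour set of `P`.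
-/

section AdjacentSwaps

variable {α M : Type*} [LinearOrder α]

theorem eq_of_forall_covBy_lt [LocallyFiniteOrder α] [WellFoundedLT α] {P Q : M ≃ α}
    (h : ∀ i j, i ⋖ j → P (Q.symm i) < P (Q.symm j)) : Q = P := by
  have hmono : StrictMono (Q.symm.trans P) := (strictMono_iff_forall_covBy _).2 h
  have hrefl : hmono.orderIsoOfSurjective _ (Q.symm.trans P).surjective = OrderIso.refl α :=
    Subsingleton.elim _ _
  ext c
  simpa using (DFunLike.congr_fun hrefl (Q c)).symm

theorem swap_covBy_induction [Finite α] {P : M ≃ α} {p : (M ≃ α) → Prop}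
    (step : ∀ Q i j, i ⋖ j → P (Q.symm j) < P (Q.symm i) → p Q → p (Q.trans (Equiv.swap i j)))
    {Q : M ≃ α} (hQ : p Q) : p P := by
  have := Fintype.ofFinite α
  have := Fintype.toLocallyFiniteOrder (α := α)
  -- Swapping a descent lexicographically decreases the list of `P`-ranks read in the order of `Q`.
  refine (InvImage.wf (fun Q : M ≃ α ↦ toLex (P ∘ Q.symm)) wellFounded_lt).induction_bot
    (fun Q hne hp ↦ ?_) hQ
  obtain ⟨i, j, hij, hle⟩ : ∃ i j, i ⋖ j ∧ P (Q.symm j) ≤ P (Q.symm i) := by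
    by_contra! h
    exact hne (eq_of_forall_covBy_lt h)
  have hlt : P (Q.symm j) < P (Q.symm i) := hle.lt_of_ne (by simpa using hij.ne')
  exact ⟨Q.trans (Equiv.swap i j), Pi.lex_desc (f := P ∘ Q.symm) hij.le hlt, step Q i j hij hlt hp⟩

end AdjacentSwaps

section CumulativeSums

variable {ι A : Type*}

theorem eq_of_sum_Iic_eq [PartialOrder ι] [LocallyFiniteOrderBot ι] [WellFoundedLT ι]
    [AddCancelCommMonoid A] {f g : ι → A}
    (h : ∀ k, ∑ l ∈ Iic k, f l = ∑ l ∈ Iic k, g l) : f = g := by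
  funext k
  induction k using WellFoundedLT.induction with
  | ind k ih =>
    have hIio : ∑ l ∈ Iio k, f l = ∑ l ∈ Iio k, g l :=
      sum_congr rfl fun l hl ↦ ih l (mem_Iio.1 hl)
    have hIic := h k
    rw [Iic_eq_cons_Iio, sum_cons, sum_cons, hIio] at hIic
    exact add_right_cancel hIic

variable [LinearOrder ι] {i j k : ι}

theorem le_iff_le_of_covBy_of_ne (hij : i ⋖ j) (hk : k ≠ i) : i ≤ k ↔ j ≤ k :=
  ⟨fun h ↦ hij.ge_of_gt (h.lt_of_ne' hk), hij.le.trans⟩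

variable [LocallyFiniteOrderBot ι]

theorem sum_Iic_comp_swap_of_covBy [AddCommMonoid A] (hij : i ⋖ j) (hk : k ≠ i) (f : ι → A) :
    ∑ l ∈ Iic k, f (Equiv.swap i j l) = ∑ l ∈ Iic k, f l := by
  have hbij : Set.BijOn (Equiv.swap i j) (Iic k) (Iic k) :=
    Equiv.swap_bijOn_self (by simpa using le_iff_le_of_covBy_of_ne hij hk)
  exact sum_nbij _ hbij.mapsTo hbij.injOn hbij.surjOn fun _ _ ↦ rfl

theorem eq_single_sub_single_of_sum_Iic_eq_zero [WellFoundedLT ι] [AddCommGroup A] {d : ι → A}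
    (hij : i ⋖ j) (hd : ∀ k ≠ i, ∑ l ∈ Iic k, d l = 0) :
    d = Pi.single i (∑ l ∈ Iic i, d l) - Pi.single j (∑ l ∈ Iic i, d l) := by
  refine eq_of_sum_Iic_eq fun k ↦ ?_
  simp only [Pi.sub_apply, sum_sub_distrib, sum_pi_single', mem_Iic]
  obtain rfl | hk := eq_or_ne k i
  · simp [hij.lt.not_ge]
  · simp [hd k hk, le_iff_le_of_covBy_of_ne hij hk]

end CumulativeSums

section StochasticDominance

variable {M : Type*} {m : ℕ} {i j : Fin m}

theorem nbhd_trans_swap (Q : M ≃ Fin m) (hij : i ⋖ j) : Nbhd Q (Q.trans (Equiv.swap i j)) := by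
  have hj : (i : ℕ) + 1 = j := by simpa using Fin.covBy_iff.1 hij
  refine ⟨i, hj ▸ j.isLt, ?_⟩
  congr
  exact Fin.ext hj.symm

theorem Nbhd.symm {P P' : M ≃ Fin m} : Nbhd P P' → Nbhd P' P := by
  rintro ⟨k, hk, rfl⟩
  exact ⟨k, hk, by simp [Equiv.trans_assoc]⟩

variable [Fintype M]

theorem sDom_iff_sum_Iic_le {P : M ≃ Fin m} {x y : M → ℝ} :
    SDom P x y ↔ ∀ k, ∑ l ∈ Iic k, y (P.symm l) ≤ ∑ l ∈ Iic k, x (P.symm l) := by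
  have hsum (z : M → ℝ) (k : Fin m) : ∑ c with P c ≤ k, z c = ∑ l ∈ Iic k, z (P.symm l) :=
    sum_equiv P (by simp) (by simp)
  simp only [SDom, hsum, P.forall_congr_left, P.apply_symm_apply]

theorem exists_transfer_of_sDom_swap [DecidableEq M] {Q : M ≃ Fin m} {x y : M → ℝ}
    (hij : i ⋖ j) (hxy : SDom Q x y) (hyx : SDom (Q.trans (Equiv.swap i j)) y x) :
    ∃ t : ℝ, 0 ≤ t ∧ y = x + Pi.single (Q.symm j) t - Pi.single (Q.symm i) t := by
  rw [sDom_iff_sum_Iic_le] at hxy hyx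
  set d : Fin m → ℝ := fun l ↦ x (Q.symm l) - y (Q.symm l) with hd
  have hd_zero : ∀ k ≠ i, ∑ l ∈ Iic k, d l = 0 := fun k hk ↦ by
    have hle : ∑ l ∈ Iic k, x (Q.symm l) ≤ ∑ l ∈ Iic k, y (Q.symm l) := by
      simpa [sum_Iic_comp_swap_of_covBy hij hk fun l ↦ x (Q.symm l),
        sum_Iic_comp_swap_of_covBy hij hk fun l ↦ y (Q.symm l)] using hyx k
    rw [hd, sum_sub_distrib, sub_eq_zero]
    exact hle.antisymm (hxy k)
  refine ⟨∑ l ∈ Iic i, d l, by simpa [hd, sum_sub_distrib] using hxy i, ?_⟩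
  funext c
  have hc := congrFun (eq_single_sub_single_of_sum_Iic_eq_zero hij hd_zero) (Q c)
  simp only [hd, Pi.sub_apply, Pi.add_apply, Pi.single_apply, Equiv.eq_symm_apply,
    Q.symm_apply_apply] at hc ⊢
  linarith

theorem sum_le_sum_of_sDom_swap {Q : M ≃ Fin m} {x y : M → ℝ} {s : Finset M}
    (hij : i ⋖ j) (hxy : SDom Q x y) (hyx : SDom (Q.trans (Equiv.swap i j)) y x)
    (hs : Q.symm i ∈ s → Q.symm j ∈ s) : ∑ c ∈ s, x c ≤ ∑ c ∈ s, y c := by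
  classical
  obtain ⟨t, ht, rfl⟩ := exists_transfer_of_sDom_swap hij hxy hyx
  have hloss : (if Q.symm i ∈ s then t else 0) ≤ if Q.symm j ∈ s then t else 0 := by
    split_ifs <;> tauto
  simpa only [Pi.sub_apply, Pi.add_apply, sum_sub_distrib, sum_add_distrib, sum_pi_single',
    add_sub_assoc, le_add_iff_nonneg_right, sub_nonneg] using hloss

theorem local_sufficiency_SD_general {f : (M ≃ Fin m) → M → ℝ}
    (hloc : ∀ Q Q', Nbhd Q Q' → SDom Q (f Q) (f Q')) (P P' : M ≃ Fin m) :
    SDom P (f P) (f P') := by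
  intro c
  refine swap_covBy_induction (P := P) (Q := P')
    (p := fun Q ↦ ∑ b with P b ≤ P c, f P' b ≤ ∑ b with P b ≤ P c, f Q b)
    (fun Q i j hij hlt hQ ↦ hQ.trans ?_) le_rfl
  have hnbhd := nbhd_trans_swap Q hij
  exact sum_le_sum_of_sDom_swap hij (hloc _ _ hnbhd) (hloc _ _ hnbhd.symm)
    (by simpa using hlt.le.trans)

end StochasticDominance

/-- **(Carroll 2012) Local sufficiency for SD-strategyproofness.**
If a mechanism `φ` is locally SD-strategyproof (truthful assignment stochastically
dominates the assignment under any misreport in the neighborhood of the truthful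
preference order), then `φ` is SD-strategyproof (the same holds for all misreports). -/
theorem local_sufficiency_SD
    {N M : Type*} [Fintype N] [DecidableEq N] [Fintype M] [DecidableEq M]
    {m : ℕ} (hm : Fintype.card M = m)
    (q : M → ℕ) (hq : ∀ j, 1 ≤ q j) (hcap : Fintype.card N ≤ ∑ j, q j)
    (φ : (N → M ≃ Fin m) → N → M → ℝ) (hφ : Feasible q φ)
    (hloc : ∀ (P : N → M ≃ Fin m) (i : N) (P' : M ≃ Fin m), Nbhd (P i) P' →
      SDom (P i) (φ P i) (φ (Function.update P i P') i)) :
    ∀ (P : N → M ≃ Fin m) (i : N) (P' : M ≃ Fin m),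
      SDom (P i) (φ P i) (φ (Function.update P i P') i) := by
  intro P i P'
  simpa using local_sufficiency_SD_general (f := fun Q ↦ φ (Function.update P i Q) i)
    (fun Q Q' h ↦ by simpa using hloc (Function.update P i Q) i Q' (by simpa using h)) (P i) P'
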